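/- Let $d$ be a positive integer and let $\theta^{(d)} \in \mathbb{R}^d$, $v > 0$. Then the risk of the James--Stein estimator satisfies $\mathrm{E}_v\|\theta^{(d)} - \hat{\theta}^{(d)}_{\mathrm{JS}}(X^{(d)})\|^2 \leq 2v + \frac{d v \|\theta^{(d)}\|^2}{d v + \|\theta^{(d)}\|^2}$, where $X^{(d)} \sim \mathcal{N}(\theta^{(d)}, v I_d)$ and $\hat{\theta}^{(d)}_{\mathrm{JS}}(x) = \left(1 - \frac{(d-2)v}{\|x\|^2}\right)x$. -/

import Mathlib

open MeasureTheory ProbabilityTheory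

/-!
Write `N = ‖X‖²`, `c = (d - 2) v` and `t = ‖θ‖²`. By the AM–GM inequality `1 / N` is at most
`∏ i, |X i| ^ (-2 / d)`, so it is integrable when `d > 2`. Stein's lemma, applied in each coordinate
to `x i / ‖x‖²`, gives `E[⟨X - θ, X⟩ / N] = c E[1 / N]`, hence the risk is `d v - c² E[1 / N]`.

For a lower bound on `E[1 / N]`, expand `N = ⟨X - θ, X⟩ + ⟨θ, X - θ⟩ + t` and divide by `N`. The
middle term has nonpositive expectation: the reflection `x ↦ 2 θ - x` preserves the law of `X`,
changes the sign of `⟨θ, X - θ⟩`, and makes `N` larger exactly when `⟨θ, X - θ⟩` is negative.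
Therefore `1 ≤ (c + t) E[1 / N]`, and the risk is at most `2 v + c t / (c + t)`, which is increasing
in `c ≤ d v`.
-/

open scoped NNReal

section Gaussian

variable {m : ℝ} {v : ℝ≥0} {f : ℝ → ℝ}

lemma integrable_gaussianReal_iff_integrable_pdf_mul (hv : v ≠ 0) :
    Integrable f (gaussianReal m v) ↔ Integrable fun x ↦ gaussianPDFReal m v x * f x := by
  rw [gaussianReal_of_var_ne_zero m hv,
    integrable_withDensity_iff_integrable_smul' (measurable_gaussianPDF m v)
      (ae_of_all _ fun _ ↦ gaussianPDF_lt_top)]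
  simp only [toReal_gaussianPDF, smul_eq_mul]

lemma hasDerivAt_gaussianPDFReal (m : ℝ) (v : ℝ≥0) (x : ℝ) :
    HasDerivAt (gaussianPDFReal m v) (-((x - m) / v) * gaussianPDFReal m v x) x := by
  have exponent_deriv : HasDerivAt (fun y : ℝ ↦ -(y - m) ^ 2 / (2 * v)) (-((x - m) / v)) x := by
    refine ((((hasDerivAt_id x).sub_const m).pow 2).neg.div_const (2 * (v : ℝ))).congr_deriv ?_
    simp only [id]
    field_simp
    norm_num [mul_comm]
  rw [gaussianPDFReal_def]
  exact (exponent_deriv.exp.const_mul (√(2 * Real.pi * v))⁻¹).congr_deriv (by ring)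

lemma integral_sub_mul_gaussianReal {f' : ℝ → ℝ} (hf : ∀ x, HasDerivAt f (f' x) x)
    (f_int : Integrable f (gaussianReal m v)) (f'_int : Integrable f' (gaussianReal m v))
    (mul_int : Integrable (fun x ↦ (x - m) * f x) (gaussianReal m v)) :
    ∫ x, (x - m) * f x ∂gaussianReal m v = v * ∫ x, f' x ∂gaussianReal m v := by
  obtain rfl | hv := eq_or_ne v 0
  · simp
  have pdf_int {g : ℝ → ℝ} (hg : Integrable g (gaussianReal m v)) :=
    (integrable_gaussianReal_iff_integrable_pdf_mul hv).1 hg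
  have hderiv (x : ℝ) : HasDerivAt (fun y ↦ gaussianPDFReal m v y * f y)
      (gaussianPDFReal m v x * (f' x - (v : ℝ)⁻¹ * ((x - m) * f x))) x :=
    ((hasDerivAt_gaussianPDFReal m v x).mul (hf x)).congr_deriv (by ring)
  have score_int := mul_int.const_mul (v : ℝ)⁻¹
  have hzero : ∫ x, (f' x - (v : ℝ)⁻¹ * ((x - m) * f x)) ∂gaussianReal m v = 0 := by
    rw [integral_gaussianReal_eq_integral_smul hv]
    exact integral_eq_zero_of_hasDerivAt_of_integrable hderiv (pdf_int (f'_int.sub score_int))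
      (pdf_int f_int)
  rw [integral_sub f'_int score_int, integral_const_mul, sub_eq_zero] at hzero
  rw [hzero, mul_inv_cancel_left₀ (NNReal.coe_ne_zero.2 hv)]

lemma integrable_abs_rpow_gaussianReal (hv : v ≠ 0) {s : ℝ} (hs : -1 < s) :
    Integrable (fun x ↦ |x| ^ s) (gaussianReal m v) := by
  have : (0 : ℝ) < v := NNReal.coe_pos.2 (pos_iff_ne_zero.2 hv)
  have centered : Integrable fun x : ℝ ↦ |x| ^ s * Real.exp (-(4 * v : ℝ)⁻¹ * |x| ^ 2) := by
    refine (integrable_fun_norm_addHaar (volume : Measure ℝ)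
      (f := fun r ↦ r ^ s * Real.exp (-(4 * v : ℝ)⁻¹ * r ^ 2))).2 ?_
    simpa using integrableOn_rpow_mul_exp_neg_mul_sq (b := (4 * v : ℝ)⁻¹) (by positivity) hs
  rw [integrable_gaussianReal_iff_integrable_pdf_mul hv]
  refine (centered.const_mul ((√(2 * Real.pi * v))⁻¹ * Real.exp (m ^ 2 / (2 * v)))).mono'
    (by fun_prop) (ae_of_all _ fun x ↦ ?_)
  have exponent_le : -(x - m) ^ 2 / (2 * v) ≤ m ^ 2 / (2 * v) + -(4 * v : ℝ)⁻¹ * |x| ^ 2 := by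
    rw [sq_abs, ← sub_nonneg]
    have : m ^ 2 / (2 * v) + -(4 * v : ℝ)⁻¹ * x ^ 2 - -(x - m) ^ 2 / (2 * v)
        = (x - 2 * m) ^ 2 / (4 * v) := by
      field_simp
      ring
    rw [this]
    positivity
  rw [Real.norm_of_nonneg (mul_nonneg (gaussianPDFReal_nonneg m v x) (by positivity))]
  calc gaussianPDFReal m v x * |x| ^ s
      ≤ (√(2 * Real.pi * v))⁻¹ * Real.exp (m ^ 2 / (2 * v) + -(4 * v : ℝ)⁻¹ * |x| ^ 2)
          * |x| ^ s := by
        rw [gaussianPDFReal]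
        gcongr
    _ = _ := by
        rw [Real.exp_add]
        ring

end Gaussian

section Resampling

variable {ι : Type*} [Fintype ι] [DecidableEq ι] {X : ι → Type*} [∀ i, MeasurableSpace (X i)]
  {μ : (i : ι) → Measure (X i)} [∀ i, IsProbabilityMeasure (μ i)]

lemma measurePreserving_update (i : ι) :
    MeasurePreserving (fun p : ((j : ι) → X j) × X i ↦ Function.update p.1 i p.2)
      ((Measure.pi μ).prod (μ i)) (Measure.pi μ) := by
  have update_meas : Measurable fun p : ((j : ι) → X j) × X i ↦ Function.update p.1 i p.2 := by
    fun_prop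
  refine ⟨update_meas, (Measure.pi_eq fun s hs ↦ ?_).symm⟩
  have preimage_eq : (fun p : ((j : ι) → X j) × X i ↦ Function.update p.1 i p.2) ⁻¹'
      Set.univ.pi s = Set.univ.pi (Function.update s i Set.univ) ×ˢ s i := by
    ext p
    simp only [Set.mem_preimage, Set.mem_univ_pi, Set.mem_prod]
    rw [Function.forall_update_iff (p := fun j y ↦ y ∈ s j),
      Function.forall_update_iff (p := fun j S ↦ p.1 j ∈ S)]
    simp [and_comm]
  rw [Measure.map_apply update_meas (MeasurableSet.univ_pi hs), preimage_eq, Measure.prod_prod,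
    Measure.pi_pi, ← Finset.prod_erase_mul _ _ (Finset.mem_univ i),
    ← Finset.prod_erase_mul _ _ (Finset.mem_univ i)]
  rw [Function.update_self, measure_univ, mul_one]
  congr 1
  refine Finset.prod_congr rfl fun j hj ↦ ?_
  rw [Function.update_of_ne (Finset.ne_of_mem_erase hj)]

lemma integral_eq_integral_integral_update {E : Type*} [NormedAddCommGroup E]
    [NormedSpace ℝ E] (i : ι) {f : ((j : ι) → X j) → E}
    (hf : Integrable f (Measure.pi μ)) :
    ∫ x, f x ∂Measure.pi μ = ∫ x, ∫ t, f (Function.update x i t) ∂μ i ∂Measure.pi μ := by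
  have update_mp := measurePreserving_update (μ := μ) i
  rw [← update_mp.hasLaw.integral_comp hf.aestronglyMeasurable]
  exact integral_prod _ (update_mp.integrable_comp_of_integrable hf)

end Resampling

section Stein

variable {ι : Type*} [Fintype ι] [DecidableEq ι]

lemma integral_sub_mul_pi_of_gaussianReal {μ : ι → Measure ℝ} [∀ j, IsProbabilityMeasure (μ j)]
    {i : ι} {m : ℝ} {v : ℝ≥0} (hμ : μ i = gaussianReal m v) {f f' : (ι → ℝ) → ℝ}
    (hf : ∀ᵐ x ∂Measure.pi μ, ∀ t,
      HasDerivAt (fun s ↦ f (Function.update x i s)) (f' (Function.update x i t)) t)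
    (f_int : Integrable f (Measure.pi μ)) (f'_int : Integrable f' (Measure.pi μ))
    (mul_int : Integrable (fun x ↦ (x i - m) * f x) (Measure.pi μ)) :
    ∫ x, (x i - m) * f x ∂Measure.pi μ = v * ∫ x, f' x ∂Measure.pi μ := by
  have section_int {g : (ι → ℝ) → ℝ} (hg : Integrable g (Measure.pi μ)) :
      ∀ᵐ x ∂Measure.pi μ, Integrable (fun t ↦ g (Function.update x i t)) (gaussianReal m v) :=
    hμ ▸ ((measurePreserving_update i).integrable_comp_of_integrable hg).prod_right_ae
  rw [integral_eq_integral_integral_update i mul_int, integral_eq_integral_integral_update i f'_int,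
    ← integral_const_mul, hμ]
  refine integral_congr_ae ?_
  filter_upwards [hf, section_int f_int, section_int f'_int, section_int mul_int]
    with x hderiv f_section f'_section mul_section
  simp only [Function.update_self] at mul_section ⊢
  exact integral_sub_mul_gaussianReal hderiv f_section f'_section mul_section

end Stein

section Symmetry

lemma integral_nonpos_of_add_comp_nonpos {α : Type*} [MeasurableSpace α] {μ : Measure α} {R : α → α}
    (hR : MeasurePreserving R μ μ) {f : α → ℝ} (hf : Integrable f μ)
    (h : ∀ᵐ x ∂μ, f x + f (R x) ≤ 0) : ∫ x, f x ∂μ ≤ 0 := by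
  have pair_nonpos : ∫ x, (f x + f (R x)) ∂μ ≤ 0 := integral_nonpos_of_ae h
  have hfR : Integrable (fun x ↦ f (R x)) μ := hR.integrable_comp_of_integrable hf
  have integral_comp : ∫ x, f (R x) ∂μ = ∫ x, f x ∂μ :=
    hR.hasLaw.integral_comp hf.aestronglyMeasurable
  rw [integral_add hf hfR, integral_comp] at pair_nonpos
  linarith

variable {ι : Type*} [Fintype ι] {θ : ι → ℝ}

lemma sum_mul_sub_reflect (x : ι → ℝ) :
    ∑ i, θ i * (2 * θ i - x i - θ i) = -∑ i, θ i * (x i - θ i) := by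
  rw [← Finset.sum_neg_distrib]
  exact Finset.sum_congr rfl fun i _ ↦ by ring

lemma sum_sq_sub_sum_sq_reflect (x : ι → ℝ) :
    ∑ i, x i ^ 2 - ∑ i, (2 * θ i - x i) ^ 2 = 4 * ∑ i, θ i * (x i - θ i) := by
  rw [Finset.mul_sum, ← Finset.sum_sub_distrib]
  exact Finset.sum_congr rfl fun i _ ↦ by ring

lemma integral_sum_mul_sub_mul_comp_sum_sq_nonpos {μ : Measure (ι → ℝ)}
    (hμ : MeasurePreserving (fun x i ↦ 2 * θ i - x i) μ μ) (hpos : ∀ᵐ x ∂μ, 0 < ∑ i, x i ^ 2)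
    {g : ℝ → ℝ} (hg : AntitoneOn g (Set.Ioi 0))
    (hint : Integrable (fun x ↦ (∑ i, θ i * (x i - θ i)) * g (∑ i, x i ^ 2)) μ) :
    ∫ x, (∑ i, θ i * (x i - θ i)) * g (∑ i, x i ^ 2) ∂μ ≤ 0 := by
  refine integral_nonpos_of_add_comp_nonpos hμ hint ?_
  filter_upwards [hpos, hμ.quasiMeasurePreserving.ae hpos] with x hx hRx
  have norm_diff := sum_sq_sub_sum_sq_reflect (θ := θ) x
  rw [sum_mul_sub_reflect, neg_mul, ← sub_eq_add_neg, ← mul_sub]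
  rcases le_total (∑ i, θ i * (x i - θ i)) 0 with h | h
  · exact mul_nonpos_of_nonpos_of_nonneg h (sub_nonneg.2 (hg hx hRx (by linarith)))
  · exact mul_nonpos_of_nonneg_of_nonpos h (sub_nonpos.2 (hg hRx hx (by linarith)))

end Symmetry

section SumSq

variable {ι : Type*} [Fintype ι] {μ : Measure (ι → ℝ)}

lemma inv_sum_sq_le_prod_abs_rpow [Nonempty ι] {x : ι → ℝ} (hx : ∀ i, x i ≠ 0) :
    (∑ i, x i ^ 2)⁻¹ ≤ ∏ i, |x i| ^ (-2 / Fintype.card ι : ℝ) := by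
  have card_pos : (0 : ℝ) < Fintype.card ι := by exact_mod_cast Fintype.card_pos
  have one_le_card : (1 : ℝ) ≤ Fintype.card ι := by exact_mod_cast Fintype.card_pos
  have geom_le : ∏ i, (x i ^ 2) ^ (Fintype.card ι : ℝ)⁻¹ ≤ ∑ i, x i ^ 2 := by
    refine (Real.geom_mean_le_arith_mean_weighted _ (fun _ ↦ (Fintype.card ι : ℝ)⁻¹)
      (fun i ↦ x i ^ 2) (by intros; positivity) (by simp [card_pos.ne'])
      (by intros; positivity)).trans (Finset.sum_le_sum fun i _ ↦ ?_)
    exact mul_le_of_le_one_left (sq_nonneg _) (inv_le_one_of_one_le₀ one_le_card)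
  have factor_eq (i : ι) :
      |x i| ^ (-2 / Fintype.card ι : ℝ) = ((x i ^ 2) ^ (Fintype.card ι : ℝ)⁻¹)⁻¹ := by
    rw [← sq_abs, ← Real.rpow_natCast, ← Real.rpow_mul (abs_nonneg _),
      ← Real.rpow_neg (abs_nonneg _)]
    congr 1
    push_cast
    ring
  simp_rw [factor_eq, Finset.prod_inv_distrib]
  gcongr
  exact Finset.prod_pos fun i _ ↦ Real.rpow_pos_of_pos (sq_pos_of_ne_zero (hx i)) _

lemma sum_sq_update [DecidableEq ι] (x : ι → ℝ) (i : ι) (t : ℝ) :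
    ∑ j, Function.update x i t j ^ 2 = t ^ 2 + ∑ j ∈ Finset.univ.erase i, x j ^ 2 := by
  rw [← Finset.add_sum_erase _ _ (Finset.mem_univ i), Function.update_self]
  congr 1
  exact Finset.sum_congr rfl fun j hj ↦ by rw [Function.update_of_ne (Finset.ne_of_mem_erase hj)]

lemma hasDerivAt_div_sq_add {r : ℝ} (hr : 0 < r) (t : ℝ) :
    HasDerivAt (fun s ↦ s / (s ^ 2 + r)) ((t ^ 2 + r)⁻¹ - 2 * (t ^ 2 / (t ^ 2 + r) ^ 2)) t := by
  have denom_ne : t ^ 2 + r ≠ 0 := by positivity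
  have denom_deriv : HasDerivAt (fun s ↦ s ^ 2 + r) (2 * t) t := by
    simpa using (hasDerivAt_pow 2 t).add_const r
  refine ((hasDerivAt_id' t).fun_div denom_deriv denom_ne).congr_deriv ?_
  field_simp

lemma sq_div_sum_sq_le_one (x : ι → ℝ) (i : ι) : x i ^ 2 / ∑ j, x j ^ 2 ≤ 1 :=
  div_le_one_of_le₀
    (Finset.single_le_sum (f := fun j ↦ x j ^ 2) (fun _ _ ↦ sq_nonneg _) (Finset.mem_univ i))
    (by positivity)

lemma integrable_sq_div_sum_sq [IsFiniteMeasure μ] (i : ι) :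
    Integrable (fun x ↦ x i ^ 2 / ∑ j, x j ^ 2) μ := by
  refine Integrable.of_bound (Measurable.aestronglyMeasurable (by fun_prop)) 1
    (ae_of_all _ fun x ↦ ?_)
  rw [Real.norm_of_nonneg (by positivity)]
  exact sq_div_sum_sq_le_one x i

lemma integrable_div_sum_sq [IsFiniteMeasure μ] (hμ : Integrable (fun x ↦ (∑ j, x j ^ 2)⁻¹) μ)
    (i : ι) : Integrable (fun x ↦ x i / ∑ j, x j ^ 2) μ := by
  refine (hμ.add (integrable_const 1)).mono' (Measurable.aestronglyMeasurable (by fun_prop))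
    (ae_of_all _ fun x ↦ ?_)
  have abs_le : |x i| ≤ 1 + x i ^ 2 := by nlinarith [sq_abs (x i), sq_nonneg (|x i| - 1)]
  calc ‖x i / ∑ j, x j ^ 2‖ = |x i| * (∑ j, x j ^ 2)⁻¹ := by
        rw [Real.norm_eq_abs, abs_div, abs_of_nonneg (a := ∑ j, x j ^ 2) (by positivity),
          div_eq_mul_inv]
    _ ≤ (1 + x i ^ 2) * (∑ j, x j ^ 2)⁻¹ := by gcongr
    _ = (∑ j, x j ^ 2)⁻¹ + x i ^ 2 / ∑ j, x j ^ 2 := by ring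
    _ ≤ (∑ j, x j ^ 2)⁻¹ + 1 := by gcongr; exact sq_div_sum_sq_le_one x i

lemma integrable_sq_div_sum_sq_sq (hμ : Integrable (fun x ↦ (∑ j, x j ^ 2)⁻¹) μ) (i : ι) :
    Integrable (fun x ↦ x i ^ 2 / (∑ j, x j ^ 2) ^ 2) μ := by
  refine hμ.mono' (Measurable.aestronglyMeasurable (by fun_prop)) (ae_of_all _ fun x ↦ ?_)
  rw [Real.norm_of_nonneg (by positivity)]
  calc x i ^ 2 / (∑ j, x j ^ 2) ^ 2
      = x i ^ 2 / (∑ j, x j ^ 2) * (∑ j, x j ^ 2)⁻¹ := by ring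
    _ ≤ (∑ j, x j ^ 2)⁻¹ :=
        mul_le_of_le_one_left (by positivity) (sq_div_sum_sq_le_one x i)

lemma integrable_sub_mul_div_sum_sq [IsFiniteMeasure μ]
    (hμ : Integrable (fun x ↦ (∑ j, x j ^ 2)⁻¹) μ) (c : ℝ) (i : ι) :
    Integrable (fun x ↦ (x i - c) * (x i / ∑ j, x j ^ 2)) μ := by
  exact ((integrable_sq_div_sum_sq i).sub' ((integrable_div_sum_sq hμ i).const_mul c)).congr
    (ae_of_all _ fun x ↦ by ring)

lemma integrable_sum_mul_sub_mul_inv_sum_sq [IsFiniteMeasure μ]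
    (hμ : Integrable (fun x ↦ (∑ j, x j ^ 2)⁻¹) μ) (θ : ι → ℝ) :
    Integrable (fun x ↦ (∑ i, θ i * (x i - θ i)) * (∑ j, x j ^ 2)⁻¹) μ := by
  simp_rw [Finset.sum_mul]
  exact integrable_finsetSum _ fun i _ ↦
    (((integrable_div_sum_sq hμ i).const_mul (θ i)).sub' (hμ.const_mul (θ i ^ 2))).congr
      (ae_of_all _ fun x ↦ by ring)

end SumSq

/-- The law `N(θ, v I)` of the observation, encoded as the product of the one-dimensional laws
`N(θ i, v)` on the plain function space `ι → ℝ`; squared Euclidean norms are written `∑ i, x i ^ 2`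
because the norm of `ι → ℝ` is the sup norm. -/
noncomputable abbrev isotropicGaussian {ι : Type*} [Fintype ι] (θ : ι → ℝ) (v : ℝ≥0) :
    Measure (ι → ℝ) :=
  Measure.pi fun i ↦ gaussianReal (θ i) v

namespace isotropicGaussian

variable {ι : Type*} [Fintype ι] {θ : ι → ℝ} {v : ℝ≥0}

lemma measurePreserving_reflect :
    MeasurePreserving (fun x i ↦ 2 * θ i - x i) (isotropicGaussian θ v) (isotropicGaussian θ v) :=
  measurePreserving_pi _ _ fun i ↦ ⟨by fun_prop, by rw [gaussianReal_map_const_sub]; ring_nf⟩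

lemma integrable_sq_sub (i : ι) :
    Integrable (fun x ↦ (x i - θ i) ^ 2) (isotropicGaussian θ v) := by
  have hLp : MemLp (fun t ↦ t - θ i) 2 (gaussianReal (θ i) v) :=
    (memLp_id_gaussianReal 2).sub (memLp_const _)
  exact integrable_comp_eval (μ := fun j ↦ gaussianReal (θ j) v) hLp.integrable_sq

lemma integral_sq_sub (i : ι) :
    ∫ x, (x i - θ i) ^ 2 ∂isotropicGaussian θ v = v := by
  have hvar := variance_fun_id_gaussianReal (μ := θ i) (v := v)
  rw [variance_eq_integral (by fun_prop), integral_id_gaussianReal] at hvar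
  rw [← hvar]
  exact integral_comp_eval (μ := fun j ↦ gaussianReal (θ j) v) (f := fun t ↦ (t - θ i) ^ 2)
    (by fun_prop)

lemma ae_forall_ne_zero (hv : v ≠ 0) :
    ∀ᵐ x ∂isotropicGaussian θ v, ∀ i, x i ≠ 0 := by
  have (i : ι) := nullSingletonClass_gaussianReal (μ := θ i) hv
  exact ae_all_iff.2 fun i ↦ Measure.ae_eval_ne _ i 0

lemma ae_sum_sq_pos (hv : v ≠ 0) {s : Finset ι} (hs : s.Nonempty) :
    ∀ᵐ x ∂isotropicGaussian θ v, 0 < ∑ i ∈ s, x i ^ 2 := by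
  filter_upwards [ae_forall_ne_zero hv] with x hx
  exact Finset.sum_pos (fun i _ ↦ sq_pos_of_ne_zero (hx i)) hs

lemma integrable_inv_sum_sq (hv : v ≠ 0) (hι : 2 < Fintype.card ι) :
    Integrable (fun x ↦ (∑ i, x i ^ 2)⁻¹) (isotropicGaussian θ v) := by
  have : Nonempty ι := Fintype.card_pos_iff.1 (by lia)
  have exponent_gt : -1 < (-2 / Fintype.card ι : ℝ) := by
    have : (2 : ℝ) < Fintype.card ι := by exact_mod_cast hι
    rw [lt_div_iff₀ (by positivity)]
    linarith
  refine (Integrable.fintype_prod fun _ ↦ integrable_abs_rpow_gaussianReal hv exponent_gt).mono'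
    (Measurable.aestronglyMeasurable (by fun_prop)) ?_
  filter_upwards [ae_forall_ne_zero hv] with x hx
  rw [Real.norm_of_nonneg (by positivity)]
  exact inv_sum_sq_le_prod_abs_rpow hx

lemma integral_sub_mul_div_sum_sq (hv : v ≠ 0) (hι : 2 < Fintype.card ι) (i : ι) :
    ∫ x, (x i - θ i) * (x i / ∑ j, x j ^ 2) ∂isotropicGaussian θ v =
      v * ∫ x, ((∑ j, x j ^ 2)⁻¹ - 2 * (x i ^ 2 / (∑ j, x j ^ 2) ^ 2))
        ∂isotropicGaussian θ v := by
  classical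
  have inv_int := integrable_inv_sum_sq (θ := θ) hv hι
  have others_nonempty : (Finset.univ.erase i).Nonempty := by
    rw [← Finset.card_pos, Finset.card_erase_of_mem (Finset.mem_univ i), Finset.card_univ]
    lia
  refine integral_sub_mul_pi_of_gaussianReal (μ := fun j ↦ gaussianReal (θ j) v) rfl ?_
    (integrable_div_sum_sq inv_int i)
    (inv_int.sub' ((integrable_sq_div_sum_sq_sq inv_int i).const_mul 2))
    (integrable_sub_mul_div_sum_sq inv_int (θ i) i)
  filter_upwards [ae_sum_sq_pos hv others_nonempty] with x hx t
  simp only [Function.update_self, sum_sq_update]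
  exact hasDerivAt_div_sq_add hx t

lemma integral_sum_sub_mul_div_sum_sq (hv : v ≠ 0) (hι : 2 < Fintype.card ι) :
    ∫ x, ∑ i, (x i - θ i) * (x i / ∑ j, x j ^ 2) ∂isotropicGaussian θ v =
      (Fintype.card ι - 2) * v * ∫ x, (∑ j, x j ^ 2)⁻¹ ∂isotropicGaussian θ v := by
  have inv_int := integrable_inv_sum_sq (θ := θ) hv hι
  have divergence (x : ι → ℝ) : ∑ i, ((∑ j, x j ^ 2)⁻¹ - 2 * (x i ^ 2 / (∑ j, x j ^ 2) ^ 2)) =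
      (Fintype.card ι - 2) * (∑ j, x j ^ 2)⁻¹ := by
    rw [Finset.sum_sub_distrib, ← Finset.mul_sum, ← Finset.sum_div, sq (∑ j, x j ^ 2),
      div_self_mul_self', Finset.sum_const, Finset.card_univ, nsmul_eq_mul]
    ring
  rw [integral_finsetSum _ fun i _ ↦ integrable_sub_mul_div_sum_sq inv_int (θ i) i]
  simp_rw [integral_sub_mul_div_sum_sq hv hι]
  rw [← Finset.mul_sum, ← integral_finsetSum _ fun i _ ↦
    inv_int.sub' ((integrable_sq_div_sum_sq_sq inv_int i).const_mul 2)]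
  simp_rw [divergence, integral_const_mul]
  ring

lemma one_le_mul_integral_inv_sum_sq (hv : v ≠ 0) (hι : 2 < Fintype.card ι) :
    1 ≤ ((Fintype.card ι - 2) * v + ∑ i, θ i ^ 2) *
      ∫ x, (∑ j, x j ^ 2)⁻¹ ∂isotropicGaussian θ v := by
  have inv_int := integrable_inv_sum_sq (θ := θ) hv hι
  have univ_nonempty : (Finset.univ : Finset ι).Nonempty := by
    rw [← Finset.card_pos, Finset.card_univ]
    lia
  have sum_sq_pos := ae_sum_sq_pos (θ := θ) hv univ_nonempty
  have cross_int := integrable_sum_mul_sub_mul_inv_sum_sq inv_int θ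
  have stein_int := integrable_finsetSum Finset.univ fun i _ ↦
    integrable_sub_mul_div_sum_sq inv_int (θ i) i
  have cross_nonpos := integral_sum_mul_sub_mul_comp_sum_sq_nonpos
    measurePreserving_reflect sum_sq_pos antitoneOn_inv_pos cross_int
  have decompose : ∀ᵐ x ∂isotropicGaussian θ v, (1 : ℝ) =
      ∑ i, (x i - θ i) * (x i / ∑ j, x j ^ 2) + (∑ i, θ i * (x i - θ i)) * (∑ j, x j ^ 2)⁻¹
        + (∑ i, θ i ^ 2) * (∑ j, x j ^ 2)⁻¹ := by
    filter_upwards [sum_sq_pos] with x hx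
    rw [← mul_inv_cancel₀ hx.ne']
    simp only [Finset.sum_mul, ← Finset.sum_add_distrib]
    exact Finset.sum_congr rfl fun i _ ↦ by ring
  calc (1 : ℝ) = ∫ _, 1 ∂isotropicGaussian θ v := by simp
    _ = (Fintype.card ι - 2) * v * ∫ x, (∑ j, x j ^ 2)⁻¹ ∂isotropicGaussian θ v
        + ∫ x, (∑ i, θ i * (x i - θ i)) * (∑ j, x j ^ 2)⁻¹ ∂isotropicGaussian θ v
        + (∑ i, θ i ^ 2) * ∫ x, (∑ j, x j ^ 2)⁻¹ ∂isotropicGaussian θ v := by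
      rw [integral_congr_ae decompose, integral_add (stein_int.fun_add cross_int)
        (inv_int.const_mul _), integral_add stein_int cross_int, integral_const_mul,
        integral_sum_sub_mul_div_sum_sq hv hι]
    _ ≤ _ := by linarith

lemma integral_shrinkage_sq_error (hv : v ≠ 0) (hι : 2 < Fintype.card ι) (c : ℝ) :
    ∫ x, ∑ i, (θ i - (1 - c / ∑ j, x j ^ 2) * x i) ^ 2 ∂isotropicGaussian θ v =
      Fintype.card ι * v
        + (c ^ 2 - 2 * c * ((Fintype.card ι - 2) * v)) *
          ∫ x, (∑ j, x j ^ 2)⁻¹ ∂isotropicGaussian θ v := by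
  have inv_int := integrable_inv_sum_sq (θ := θ) hv hι
  have stein_int := integrable_finsetSum Finset.univ fun i _ ↦
    integrable_sub_mul_div_sum_sq inv_int (θ i) i
  have error_int := integrable_finsetSum Finset.univ fun i _ ↦
    integrable_sq_sub (θ := θ) (v := v) i
  have expand (x : ι → ℝ) : ∑ i, (θ i - (1 - c / ∑ j, x j ^ 2) * x i) ^ 2 =
      ∑ i, (x i - θ i) ^ 2 - 2 * c * ∑ i, (x i - θ i) * (x i / ∑ j, x j ^ 2)
        + c ^ 2 * (∑ j, x j ^ 2)⁻¹ := by
    rw [← div_self_mul_self' (∑ j, x j ^ 2), ← sq]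
    simp only [Finset.sum_div, Finset.mul_sum, ← Finset.sum_sub_distrib, ← Finset.sum_add_distrib]
    exact Finset.sum_congr rfl fun i _ ↦ by ring
  simp_rw [expand]
  rw [integral_add (error_int.sub' (stein_int.const_mul _)) (inv_int.const_mul _),
    integral_sub error_int (stein_int.const_mul _), integral_const_mul, integral_const_mul,
    integral_sum_sub_mul_div_sum_sq hv hι,
    integral_finsetSum _ fun i _ ↦ integrable_sq_sub i]
  simp only [integral_sq_sub, Finset.sum_const, Finset.card_univ, nsmul_eq_mul]
  ring

lemma integral_jamesStein_sq_error_le (hv : v ≠ 0) (hι : 2 < Fintype.card ι) :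
    ∫ x, ∑ i, (θ i - (1 - (Fintype.card ι - 2) * v / ∑ j, x j ^ 2) * x i) ^ 2
        ∂isotropicGaussian θ v ≤
      2 * v + (Fintype.card ι - 2) * v * (∑ i, θ i ^ 2) /
        ((Fintype.card ι - 2) * v + ∑ i, θ i ^ 2) := by
  have inv_moment_bound := one_le_mul_integral_inv_sum_sq (θ := θ) hv hι
  rw [integral_shrinkage_sq_error hv hι]
  set c : ℝ := (Fintype.card ι - 2) * v with hc
  have c_pos : 0 < c := mul_pos (sub_pos.2 (by exact_mod_cast hι)) (by positivity)
  set m := ∫ x, (∑ j, x j ^ 2)⁻¹ ∂isotropicGaussian θ v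
  set t := ∑ i, θ i ^ 2
  have t_nonneg : 0 ≤ t := by positivity
  calc Fintype.card ι * v + (c ^ 2 - 2 * c * c) * m
      = 2 * v + (c - c ^ 2 * m) := by rw [hc]; ring
    _ ≤ 2 * v + (c - c ^ 2 * (c + t)⁻¹) := by
      gcongr
      exact (inv_le_iff_one_le_mul₀' (by positivity)).2 inv_moment_bound
    _ = 2 * v + c * t / (c + t) := by field_simp; ring

end isotropicGaussian

lemma mul_div_add_le_mul_div_add {a b t : ℝ} (ha : 0 < a) (hab : a ≤ b) (ht : 0 ≤ t) :
    a * t / (a + t) ≤ b * t / (b + t) := by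
  rw [div_le_div_iff₀ (by positivity) (by linarith)]
  nlinarith [mul_nonneg (sub_nonneg.2 hab) (sq_nonneg t)]

theorem stmt10 (d : ℕ) (hd : 2 < d) (v : ℝ) (hv : 0 < v) (θ : Fin d → ℝ) :
    ∫ x : Fin d → ℝ,
        (∑ i, (θ i - (1 - ((d:ℝ)-2)*v/(∑ j, (x j)^2)) * x i)^2)
        ∂(Measure.pi fun i => gaussianReal (θ i) v.toNNReal)
      ≤ 2*v + (d:ℝ)*v*(∑ i, (θ i)^2)/((d:ℝ)*v + ∑ i, (θ i)^2) := by
  have risk_le := isotropicGaussian.integral_jamesStein_sq_error_le (θ := θ)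
    (Real.toNNReal_pos.2 hv).ne' (by rwa [Fintype.card_fin])
  rw [Fintype.card_fin, Real.coe_toNNReal v hv.le] at risk_le
  have shrinkage_pos : 0 < ((d : ℝ) - 2) * v := mul_pos (sub_pos.2 (by exact_mod_cast hd)) hv
  have shrinkage_le : ((d : ℝ) - 2) * v ≤ d * v := by linarith
  refine risk_le.trans ?_
  gcongr 2 * v + ?_
  exact mul_div_add_le_mul_div_add shrinkage_pos shrinkage_le (by positivity)
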